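/- Let G be a connected simple bipartite graph with girth at least 6 whose maximum degree Δ satisfies Δ ≥ 3. Then χ_D(G) ≤ Δ + 1; that is, there exists a proper vertex coloring c : V(G) → Fin (Δ + 1) such that the only automorphism φ of G satisfying c ∘ φ = c is the identity. -/

import Mathlib

lemma aux_greedy {V : Type*} [Fintype V] {D : ℕ} (f : V → ℕ) (hf : Function.Injective f)
    (pre : V → Prop) (g : V → Fin (D+1)) (F : V → Finset V) (hF : ∀ v, ∀ u ∈ F v, f u < f v)
    (hcard : ∀ v, ¬ pre v → (F v).card ≤ D) :
    ∃ c : V → Fin (D+1), (∀ v, pre v → c v = g v) ∧ ∀ v, ¬ pre v →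
      (∀ u ∈ F v, c u ≠ c v) ∧ (c v = 0 → ∀ a, a ≠ 0 → ∃ u ∈ F v, c u = a) := by
  classical
  have key : ∀ n, ∃ c : V → Fin (D+1), ∀ v, f v < n → (pre v → c v = g v) ∧ (¬ pre v →
      (∀ u ∈ F v, c u ≠ c v) ∧ (c v = 0 → ∀ a, a ≠ 0 → ∃ u ∈ F v, c u = a)) := by
    intro n
    induction n with
    | zero => exact ⟨fun _ => 0, fun v hv => by omega⟩
    | succ n ih =>
      obtain ⟨c, hc⟩ := ih
      by_cases hex : ∃ v, f v = n
      · obtain ⟨v, hv⟩ := hex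
        have hne : ∀ w, f w < n → w ≠ v := by rintro w hw rfl; omega
        have ha : ∃ a : Fin (D+1), (pre v → a = g v) ∧ (¬ pre v →
            (∀ u ∈ F v, c u ≠ a) ∧ (a = 0 → ∀ b, b ≠ 0 → ∃ u ∈ F v, c u = b)) := by
          by_cases hp : pre v
          · exact ⟨g v, fun _ => rfl, fun h => absurd hp h⟩
          · by_cases h0 : ∃ b : Fin (D+1), b ≠ 0 ∧ ∀ u ∈ F v, c u ≠ b
            · obtain ⟨b, hb, hb'⟩ := h0
              exact ⟨b, fun h => absurd h hp, fun _ => ⟨hb', fun h => absurd h hb⟩⟩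
            · push Not at h0
              refine ⟨0, fun h => absurd h hp, fun _ => ⟨?_, fun _ => h0⟩⟩
              intro u hu hu0
              have : (Finset.univ : Finset (Fin (D+1))) ⊆ (F v).image c := by
                intro b _
                rw [Finset.mem_image]
                by_cases hb : b = 0
                · exact ⟨u, hu, by rw [hu0, hb]⟩
                · exact h0 b hb
              have h1 := Finset.card_le_card this
              have h2 := Finset.card_image_le (s := F v) (f := c)
              have h3 := hcard v hp
              simp at h1
              omega
        obtain ⟨a, ha1, ha2⟩ := ha
        refine ⟨Function.update c v a, ?_⟩
        have hFe : ∀ w, f w ≤ n → ∀ u ∈ F w, Function.update c v a u = c u := by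
          intro w hw u hu
          apply Function.update_of_ne
          apply hne
          have := hF w u hu
          omega
        intro w hw
        have hww : ∀ b : Fin (D+1), (pre w → b = g w) ∧ (¬ pre w →
            (∀ u ∈ F w, c u ≠ b) ∧ (b = 0 → ∀ b, b ≠ 0 → ∃ u ∈ F w, c u = b)) → 
            Function.update c v a w = b → (pre w → Function.update c v a w = g w) ∧ (¬ pre w →
      (∀ u ∈ F w, Function.update c v a u ≠ Function.update c v a w) ∧ (Function.update c v a w = 0 → ∀ b, b ≠ 0 → ∃ u ∈ F w, Function.update c v a u = b)) := by
          rintro b ⟨h1, h2⟩ hb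
          rw [hb]
          refine ⟨h1, fun hp => ⟨fun u hu => ?_, fun h0 e he => ?_⟩⟩
          · rw [hFe w (by omega) u hu]; exact (h2 hp).1 u hu
          · obtain ⟨u, hu, hu'⟩ := (h2 hp).2 h0 e he
            exact ⟨u, hu, by rw [hFe w (by omega) u hu]; exact hu'⟩
        by_cases hwv : w = v
        · subst hwv
          exact hww a ⟨ha1, ha2⟩ (by simp)
        · have : f w ≠ n := fun h => hwv (hf (h.trans hv.symm))
          exact hww (c w) (hc w (by omega)) (Function.update_of_ne hwv _ _)
      · refine ⟨c, fun v hv => hc v ?_⟩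
        have : f v ≠ n := fun h => hex ⟨v, h⟩
        omega
  obtain ⟨c, hc⟩ := key (Finset.univ.sup f + 1)
  have hlt : ∀ v, f v < Finset.univ.sup f + 1 := fun v =>
    Nat.lt_succ_of_le (Finset.le_sup (Finset.mem_univ v))
  exact ⟨c, fun v => (hc v (hlt v)).1, fun v => (hc v (hlt v)).2⟩

lemma aux_rank {V : Type*} [Fintype V] (key : V → ℕ) :
    ∃ f : V → ℕ, Function.Injective f ∧ ∀ u v, f u < f v → key u ≤ key v := by
  classical
  let e := Fintype.equivFin V
  have hlt : ∀ v, (e v : ℕ) < Fintype.card V := fun v => (e v).2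
  refine ⟨fun v => key v * Fintype.card V + e v, ?_, ?_⟩
  · intro u v h
    simp only at h
    have hu := hlt u
    have hv := hlt v
    have : (e u : ℕ) = e v := by
      have := congrArg (· % Fintype.card V) h
      simpa [Nat.mul_add_mod', Nat.mod_eq_of_lt hu, Nat.mod_eq_of_lt hv] using this
    exact e.injective (Fin.ext this)
  · intro u v h
    simp only at h
    by_contra hlt'
    have hu := hlt u
    have hv := hlt v
    nlinarith

lemma aux_h {V : Type*} [Fintype V] {D : ℕ} (S : Finset V) (hS : S.card = D) (w1 w2 : V)
    (h12 : w1 ≠ w2) (hw1 : w1 ∈ S) (hw2 : w2 ∈ S) (two : Fin (D+1)) (htwo : two ≠ 0) :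
    ∃ h : V → Fin (D+1), ∀ a ∈ S, h a ≠ 0 ∧ h a ≠ two ∧ ∀ b ∈ S, h a = h b →
      a = b ∨ (a = w1 ∧ b = w2) ∨ (a = w2 ∧ b = w1) := by
  classical
  let T : Finset (Fin (D+1)) := (Finset.univ.erase 0).erase two
  have hc : (S.erase w2).card = T.card := by
    rw [Finset.card_erase_of_mem hw2, Finset.card_erase_of_mem (by simp [htwo]),
      Finset.card_erase_of_mem (by simp)]
    simp [hS]
  let e := Finset.equivOfCardEq hc
  let k : V → V := fun v => if v = w2 then w1 else v
  have hk : ∀ v ∈ S, k v ∈ S.erase w2 := by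
    intro v hv
    simp only [k]
    split_ifs with h <;> simp [*]
  refine ⟨fun v => if hv : k v ∈ S.erase w2 then (e ⟨k v, hv⟩ : Fin (D+1)) else 0, ?_⟩
  intro a ha
  have hT : ∀ z : T, (z : Fin (D+1)) ≠ 0 ∧ (z : Fin (D+1)) ≠ two := by
    intro z
    have := z.2
    simp only [T, Finset.mem_erase] at this
    exact ⟨this.2.1, this.1⟩
  simp only [hk a ha, dif_pos]
  refine ⟨(hT _).1, (hT _).2, ?_⟩
  intro b hb hab
  rw [dif_pos (hk b hb)] at hab
  have := e.injective (Subtype.ext hab)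
  have : k a = k b := congrArg Subtype.val this
  simp only [k] at this
  split_ifs at this <;> simp_all

lemma aux_core {V : Type*} [Fintype V] (G : SimpleGraph V) [DecidableRel G.Adj] (D : ℕ)
    (hD3 : 3 ≤ D) (hdeg : ∀ v, G.degree v ≤ D) (r : V) (hr : G.degree r = D)
    (d : V → ℕ) (hd0 : ∀ v, d v = 0 ↔ v = r)
    (hdadj : ∀ u v, G.Adj u v → d u = d v + 1 ∨ d v = d u + 1)
    (hlow : ∀ v, v ≠ r → ∃ p, G.Adj p v ∧ d v = d p + 1)
    (hdiso : ∀ φ : G ≃g G, φ r = r → ∀ v, d (φ v) = d v)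
    (hC4 : ∀ a b u v, G.Adj a u → G.Adj a v → G.Adj b u → G.Adj b v → a ≠ b → u = v)
    (x : V) (hx : d x = 2) :
    ∃ c : V → Fin (D + 1),
      (∀ u v : V, G.Adj u v → c u ≠ c v) ∧
      (∀ φ : G ≃g G, c ∘ φ = c → ∀ v : V, φ v = v) := by
  classical
  have hdr : d r = 0 := (hd0 r).2 rfl
  have hd1 : ∀ v, d v = 1 ↔ G.Adj r v := by
    intro v
    constructor
    · intro h
      obtain ⟨p, hp, hp'⟩ := hlow v (by rintro rfl; omega)
      have : p = r := (hd0 p).1 (by omega)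
      exact this ▸ hp
    · intro h
      have := hdadj _ _ h
      omega
  have hxr : x ≠ r := by rintro rfl; omega
  obtain ⟨w1, hw1x, hw1d⟩ := hlow x hxr
  have hw1 : G.Adj r w1 := (hd1 w1).1 (by omega)
  obtain ⟨w2, hw2, hw12⟩ : ∃ w2, G.Adj r w2 ∧ w1 ≠ w2 := by
    have : 1 < (G.neighborFinset r).card := by
      rw [G.card_neighborFinset_eq_degree]; omega
    obtain ⟨b, hb, hbn⟩ := Finset.exists_mem_ne this w1
    exact ⟨b, by simpa using hb, hbn.symm⟩
  obtain ⟨isy, hyu, hya, hyex⟩ : ∃ isy : V → Prop, (∀ a b, isy a → isy b → a = b) ∧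
      (∀ a, isy a → G.Adj x a ∧ d a = 3) ∧
      ((∃ a, isy a) ∨ ∀ a, G.Adj x a → a = w1) := by
    by_cases h : ∃ a, G.Adj x a ∧ d a = 3
    · obtain ⟨a, ha⟩ := h
      exact ⟨fun v => v = a, fun u v hu hv => hu.trans hv.symm, fun v hv => hv ▸ ha,
        Or.inl ⟨a, rfl⟩⟩
    · refine ⟨fun _ => False, by simp, by simp, Or.inr ?_⟩
      intro a ha
      have h3 : d a ≠ 3 := fun h' => h ⟨a, ha, h'⟩
      have := hdadj _ _ ha
      have ha1 : G.Adj r a := (hd1 a).1 (by omega)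
      exact hC4 r x a w1 ha1 hw1 ha hw1x.symm hxr.symm
  let two : Fin (D+1) := Fin.last D
  have htwo : two ≠ 0 := by
    intro h
    have := congrArg Fin.val h
    simp [two] at this
    omega
  obtain ⟨h, hh⟩ := aux_h (G.neighborFinset r) (by rw [G.card_neighborFinset_eq_degree]; exact hr)
    w1 w2 hw12 (by simpa using hw1) (by simpa using hw2) two htwo
  replace hh : ∀ a, G.Adj r a → h a ≠ 0 ∧ h a ≠ two ∧ ∀ b, G.Adj r b → h a = h b →
      a = b ∨ (a = w1 ∧ b = w2) ∨ (a = w2 ∧ b = w1) := by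
    intro a ha
    obtain ⟨h1, h2, h3⟩ := hh a (by simpa using ha)
    exact ⟨h1, h2, fun b hb => h3 b (by simpa using hb)⟩
  let pre : V → Prop := fun v => v = r ∨ G.Adj r v ∨ v = x ∨ isy v
  let g : V → Fin (D+1) := fun v => if G.Adj r v then h v else if isy v then two else 0
  let ny : V → Prop := fun v => d v = 2 ∧ ∃ y, isy y ∧ G.Adj v y
  let key : V → ℕ := fun v => if pre v then 0 else if ny v then 1 else d v + 2
  obtain ⟨f, hfinj, hfkey⟩ := aux_rank key
  let low : V → V → Prop := fun p v => G.Adj p v ∧ d v = d p + 1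
  let single : V → Prop := fun v => ∀ a b, low a v → low b v → a = b
  let sib : V → V → Prop := fun u v => u ≠ v ∧ single u ∧ single v ∧ ∃ p, low p u ∧ low p v
  have hsibsymm : ∀ u v, sib u v → sib v u := by
    rintro u v ⟨h1, h2, h3, p, h4, h5⟩
    exact ⟨h1.symm, h3, h2, p, h5, h4⟩
  let F : V → Finset V := fun v => Finset.univ.filter fun u => f u < f v ∧ (G.Adj u v ∨ sib u v)
  have hFm : ∀ u v, u ∈ F v ↔ f u < f v ∧ (G.Adj u v ∨ sib u v) := by simp [F]
  have hpre2 : ∀ v, ¬ pre v → 2 ≤ d v := by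
    intro v hv
    by_contra hlt
    have : d v = 0 ∨ d v = 1 := by omega
    rcases this with h | h
    · exact hv (Or.inl ((hd0 v).1 h))
    · exact hv (Or.inr (Or.inl ((hd1 v).1 h)))
  have hsingle2 : ∀ v, d v = 2 → single v := by
    rintro v hv a b ⟨ha, ha'⟩ ⟨hb, hb'⟩
    exact hC4 r v a b ((hd1 a).1 (by omega)) ((hd1 b).1 (by omega)) ha.symm hb.symm
      (by rintro rfl; omega)
  have hFcard : ∀ v, ¬ pre v → (F v).card < D ∨ ((∀ u ∈ F v, G.Adj u v) ∧ ¬ single v) := by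
    intro v hv
    have hv2 := hpre2 v hv
    obtain ⟨p, hp, hpd⟩ := hlow v (by rintro rfl; omega)
    by_cases hny : ny v
    · left
      obtain ⟨hdv, y, hy, hvy⟩ := id hny
      have hsub : F v ⊆ {p, y} := by
        intro u hu
        obtain ⟨hlt, hu⟩ := (hFm u v).1 hu
        have hk := hfkey _ _ hlt
        have hkv : key v = 1 := by simp [key, hv, hny]
        rw [hkv] at hk
        have hu3 : pre u ∨ ny u := by
          by_contra hcon
          push Not at hcon
          simp [key, hcon.1, hcon.2] at hk
        simp only [Finset.mem_insert, Finset.mem_singleton]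
        rcases hu with hu | ⟨hne, -, hsv, q, hqu, hqv⟩
        · have h1 := hdadj _ _ hu
          rcases h1 with h1 | h1
          · right
            rcases hu3 with (rfl | h' | rfl | h') | h'
            · omega
            · have := (hd1 u).2 h'; omega
            · omega
            · exact hyu _ _ h' hy
            · have := h'.1; omega
          · left
            exact hsingle2 v hdv _ _ ⟨hu, h1⟩ ⟨hp, hpd⟩
        · exfalso
          have hdu : d u = 2 := by have := hqu.2; have := hqv.2; omega
          have huy : G.Adj u y := by
            rcases hu3 with (rfl | h' | rfl | h') | h'
            · omega
            · have := (hd1 u).2 h'; omega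
            · exact (hya y hy).1
            · have := (hya u h').2; omega
            · obtain ⟨-, y', hy', h''⟩ := h'
              exact hyu _ _ hy hy' ▸ h''
          have : q = y := hC4 u v q y hqu.1.symm huy hqv.1.symm hvy hne
          have h3 := (hya y hy).2
          have := hqu.2
          subst q
          omega
      have := Finset.card_le_card hsub
      have := Finset.card_le_two (a := p) (b := y)
      omega
    · have hadj : ∀ u ∈ F v, G.Adj u v → low u v := by
        intro u hu huv
        obtain ⟨hlt, -⟩ := (hFm u v).1 hu
        have hk := hfkey _ _ hlt
        have hkv : key v = d v + 2 := by simp [key, hv, hny]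
        rw [hkv] at hk
        refine ⟨huv, ?_⟩
        rcases hdadj _ _ huv with h1 | h1
        · exfalso
          by_cases hpu : pre u
          · rcases hpu with rfl | h' | rfl | h'
            · omega
            · have := (hd1 u).2 h'; omega
            · omega
            · have := (hya u h').2
              exact hny ⟨by omega, u, h', huv.symm⟩
          · by_cases hnu : ny u
            · have := hnu.1; omega
            · have : key u = d u + 2 := by simp [key, hpu, hnu]
              omega
        · exact h1
      by_cases hs : single v
      · left
        have hpr : p ≠ r := by rintro rfl; omega
        obtain ⟨q, hq, hqd⟩ := hlow p hpr
        have hsub : F v ⊆ insert p (((G.neighborFinset p).erase v).erase q) := by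
          intro u hu
          have hu' := ((hFm u v).1 hu).2
          by_cases huv : G.Adj u v
          · have := hs _ _ (hadj u hu huv) ⟨hp, hpd⟩
            simp [this]
          · obtain ⟨hne, -, -, q', hq1, hq2⟩ := hu'.resolve_left huv
            have : q' = p := hs _ _ hq2 ⟨hp, hpd⟩
            subst q'
            have h1 := hq1.2
            have h2 : u ≠ q := by rintro rfl; omega
            simp [h2, hne, hq1.1]
        have h1 := Finset.card_le_card hsub
        have h2 := Finset.card_insert_le p (((G.neighborFinset p).erase v).erase q)
        have hqv : q ≠ v := by rintro rfl; omega
        rw [Finset.card_erase_of_mem (by simp [hqv, hq.symm]),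
          Finset.card_erase_of_mem (by simp [hp]), G.card_neighborFinset_eq_degree] at h2
        have := hdeg p
        omega
      · right
        refine ⟨fun u hu => ?_, hs⟩
        rcases ((hFm u v).1 hu).2 with h' | h'
        · exact h'
        · exact absurd h'.2.2.1 hs
  obtain ⟨c, hcpre, hcn⟩ := aux_greedy f hfinj pre g F (fun v u hu => ((hFm u v).1 hu).1) (by
    intro v hv
    rcases hFcard v hv with h' | ⟨h', -⟩
    · omega
    · have : F v ⊆ G.neighborFinset v := fun u hu => by simpa using (h' u hu).symm
      have := Finset.card_le_card this
      rw [G.card_neighborFinset_eq_degree] at this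
      exact this.trans (hdeg v))
  have hcr : c r = 0 := by
    have h1 : ¬ isy r := fun h' => by have := (hya r h').2; omega
    rw [hcpre r (Or.inl rfl)]; simp [g, h1]
  have hcx : c x = 0 := by
    have h1 : ¬ isy x := fun h' => by have := (hya x h').2; omega
    have h2 : ¬ G.Adj r x := fun h' => by have := (hd1 x).2 h'; omega
    rw [hcpre x (Or.inr (Or.inr (Or.inl rfl)))]; simp [g, h1, h2]
  have hcw : ∀ w, G.Adj r w → c w = h w := by
    intro w hw
    rw [hcpre w (Or.inr (Or.inl hw))]; simp [g, hw]
  have hcy : ∀ y, isy y → c y = two := by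
    intro y hy
    have h2 : ¬ G.Adj r y := fun h' => by have := (hd1 y).2 h'; have := (hya y hy).2; omega
    rw [hcpre y (Or.inr (Or.inr (Or.inr hy)))]; simp [g, hy, h2]
  have hZ : ∀ v, c v = 0 → v = r ∨ v = x ∨ (d v ≠ 2 ∧ ∃ u, G.Adj u v ∧ c u = two) := by
    intro v hv
    by_cases hpv : pre v
    · rcases hpv with h' | h' | h' | h'
      · exact Or.inl h'
      · rw [hcw v h'] at hv
        exact absurd hv (hh v h').1
      · exact Or.inr (Or.inl h')
      · rw [hcy v h'] at hv
        exact absurd hv htwo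
    · right; right
      have hall := (hcn v hpv).2 hv
      rcases hFcard v hpv with h' | ⟨h1, h2⟩
      · exfalso
        have : (Finset.univ.erase (0 : Fin (D+1))) ⊆ (F v).image c := by
          intro b hb
          rw [Finset.mem_image]
          exact hall b (Finset.ne_of_mem_erase hb)
        have h1 := Finset.card_le_card this
        have h2 := Finset.card_image_le (s := F v) (f := c)
        rw [Finset.card_erase_of_mem (Finset.mem_univ _)] at h1
        simp at h1
        omega
      · refine ⟨fun h' => h2 (hsingle2 v h'), ?_⟩
        obtain ⟨u, hu, hu'⟩ := hall two htwo
        exact ⟨u, h1 u hu, hu'⟩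
  have hkeypre : ∀ u v, f u < f v → pre v → pre u := by
    intro u v hlt hv
    by_contra hu
    have hk := hfkey _ _ hlt
    have hkv : key v = 0 := by simp [key, hv]
    have : 0 < key u := by
      simp only [key, if_neg hu]; split_ifs <;> omega
    omega
  have hdisj : ∀ u v, f u < f v → (G.Adj u v ∨ sib u v) → ¬ pre v → c u ≠ c v := by
    intro u v hlt huv hv
    exact (hcn v hv).1 u ((hFm u v).2 ⟨hlt, huv⟩)
  have hprepre : ∀ u v, G.Adj u v → pre u → pre v → d u < d v → c u ≠ c v := by
    intro u v huv hu hv hlt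
    have hda := hdadj _ _ huv
    rcases hv with rfl | h' | rfl | h'
    · omega
    · have := (hd1 v).2 h'
      have : u = r := (hd0 u).1 (by omega)
      rw [this, hcr, hcw v h']
      exact (hh v h').1.symm
    · have h1 : G.Adj r u := (hd1 u).1 (by omega)
      rw [hcx, hcw u h1]
      exact (hh u h1).1
    · have h3 := (hya v h').2
      rw [hcy v h']
      rcases hu with rfl | hu | rfl | hu
      · rw [hcr]; exact htwo.symm
      · have := (hd1 u).2 hu; omega
      · rw [hcx]; exact htwo.symm
      · have := (hya u hu).2; omega
  have hproper' : ∀ u v, f u < f v → G.Adj u v → c u ≠ c v := by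
    intro u v hlt huv
    by_cases hv : pre v
    · have hu := hkeypre u v hlt hv
      rcases hdadj _ _ huv with h1 | h1
      · exact (hprepre v u huv.symm hv hu (by omega)).symm
      · exact hprepre u v huv hu hv (by omega)
    · exact hdisj u v hlt (Or.inl huv) hv
  have hproper : ∀ u v, G.Adj u v → c u ≠ c v := by
    intro u v huv
    rcases lt_trichotomy (f u) (f v) with h' | h' | h'
    · exact hproper' u v h' huv
    · exact absurd (hfinj h') huv.ne
    · exact (hproper' v u h' huv.symm).symm
  have hsib' : ∀ u v, f u < f v → 2 ≤ d v → sib u v → c u ≠ c v := by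
    intro u v hlt h2 huv
    by_cases hv : pre v
    · exfalso
      have hu := hkeypre u v hlt hv
      obtain ⟨hne, -, -, p, hp1, hp2⟩ := huv
      have e1 := hp1.2
      have e2 := hp2.2
      have hp : ∀ w, pre w → 2 ≤ d w → w = x ∨ isy w := by
        rintro w (rfl | h' | h' | h') hw
        · omega
        · have := (hd1 w).2 h'; omega
        · exact Or.inl h'
        · exact Or.inr h'
      rcases hp u hu (by omega) with h1 | h1 <;> rcases hp v hv h2 with h3 | h3
      · exact hne (h1.trans h3.symm)
      · have := (hya v h3).2
        subst h1; omega
      · have := (hya u h1).2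
        subst h3; omega
      · exact hne (hyu _ _ h1 h3)
    · exact hdisj u v hlt (Or.inr huv) hv
  have hsib : ∀ u v, 2 ≤ d v → sib u v → c u ≠ c v := by
    intro u v h2 huv
    rcases lt_trichotomy (f u) (f v) with h' | h' | h'
    · exact hsib' u v h' h2 huv
    · exact absurd (hfinj h') huv.1
    · obtain ⟨p, hp1, hp2⟩ := huv.2.2.2
      exact (hsib' v u h' (by rw [hp1.2, ← hp2.2]; exact h2) (hsibsymm _ _ huv)).symm
  refine ⟨c, hproper, ?_⟩
  intro φ hφ
  have hcφ : ∀ v, c (φ v) = c v := fun v => congrFun hφ v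
  have hno2 : ∀ u, G.Adj r u → c u ≠ two := fun u hu => by
    rw [hcw u hu]; exact (hh u hu).2.1
  have hno2' : ∀ u, G.Adj u (φ r) → c u ≠ two := by
    intro u hu
    have h1 : φ (φ.symm u) = u := φ.apply_symm_apply u
    rw [← h1] at hu ⊢
    rw [hcφ]
    exact hno2 _ (φ.map_adj_iff.1 hu).symm
  have hφr : φ r = r := by
    rcases hZ (φ r) (by rw [hcφ, hcr]) with h' | h' | ⟨-, u, hu, hu'⟩
    · exact h'
    · exfalso
      rcases hyex with ⟨y, hy⟩ | hall
      · exact hno2' y (by rw [h']; exact (hya y hy).1.symm) (hcy y hy)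
      · have e1 := hall (φ w1) (by rw [← h']; exact φ.map_adj_iff.2 hw1)
        have e2 := hall (φ w2) (by rw [← h']; exact φ.map_adj_iff.2 hw2)
        exact hw12 (φ.injective (e1.trans e2.symm))
    · exact absurd hu' (hno2' u hu)
  have hdφ := hdiso φ hφr
  have hw2no : ∀ u, G.Adj w2 u → d u = 2 → c u ≠ 0 := by
    intro u hu hdu hcu
    rcases hZ u hcu with rfl | rfl | ⟨h', -⟩
    · omega
    · exact hw12 (hC4 r u w1 w2 hw1 hw2 hw1x.symm hu.symm hxr.symm)
    · exact h' hdu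
  have main : ∀ n, ∀ v, d v = n → φ v = v := by
    intro n
    induction n using Nat.strong_induction_on with
    | _ n ih =>
      intro v hv
      by_cases h0 : n = 0
      · rw [(hd0 v).1 (by omega)]; exact hφr
      by_cases h1 : n = 1
      · have hvr : G.Adj r v := (hd1 v).1 (by omega)
        have hvr' : G.Adj r (φ v) := (hd1 _).1 (by rw [hdφ]; omega)
        rcases (hh v hvr).2.2 (φ v) hvr' (by rw [← hcw v hvr, ← hcw _ hvr', hcφ]) with
          h' | ⟨h1, h2⟩ | ⟨h1, h2⟩
        · exact h'.symm
        · exfalso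
          subst h1
          refine hw2no (φ x) ?_ (by rw [hdφ, hx]) (by rw [hcφ, hcx])
          rw [← h2]
          exact φ.map_adj_iff.2 hw1x
        · exfalso
          subst h1
          have e : φ (φ.symm x) = x := φ.apply_symm_apply x
          refine hw2no (φ.symm x) ?_ (by rw [← hdφ, e, hx]) (by rw [← hcφ, e, hcx])
          rw [← φ.map_adj_iff, e, h2]
          exact hw1x
      · have hlowfix : ∀ a, low a v → φ a = a := fun a ha =>
          ih (d a) (by have := ha.2; omega) a rfl
        have hlowφ : ∀ a, low a v → low a (φ v) := by
          intro a ha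
          have : G.Adj (φ a) (φ v) := φ.map_adj_iff.2 ha.1
          rw [hlowfix a ha] at this
          exact ⟨this, by rw [hdφ]; exact ha.2⟩
        by_cases hs : single v
        · by_contra hne
          obtain ⟨p, hp⟩ := hlow v (by rintro rfl; omega)
          refine hsib (φ v) v (by omega) ⟨hne, ?_, hs, p, hlowφ p hp, hp⟩ (hcφ v)
          have hback : ∀ a, low a (φ v) → low (φ.symm a) v := by
            intro a ha
            have e : φ (φ.symm a) = a := φ.apply_symm_apply a
            refine ⟨?_, ?_⟩
            · rw [← φ.map_adj_iff, e]; exact ha.1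
            · rw [← hdφ v, ← hdφ (φ.symm a), e]; exact ha.2
          intro a b ha hb
          exact φ.symm.injective (hs _ _ (hback a ha) (hback b hb))
        · simp only [single] at hs
          push Not at hs
          obtain ⟨a, b, ha, hb, hab⟩ := hs
          exact hC4 a b (φ v) v (hlowφ a ha).1 ha.1 (hlowφ b hb).1 hb.1 hab
  exact fun v => main (d v) v rfl

theorem bipartite_girth_six_distinguishing_chromatic {V : Type*} [Fintype V]
    (G : SimpleGraph V) [DecidableRel G.Adj]
    (hconn : G.Connected) (hbip : G.Colorable 2) (hgirth : 6 ≤ G.egirth)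
    (hΔ : 3 ≤ G.maxDegree) :
    ∃ c : V → Fin (G.maxDegree + 1),
      (∀ u v : V, G.Adj u v → c u ≠ c v) ∧
      (∀ φ : G ≃g G, c ∘ φ = c → ∀ v : V, φ v = v) := by
  classical
  have : Nonempty V := hconn.nonempty
  obtain ⟨r, hr⟩ := G.exists_maximal_degree_vertex
  have hlow : ∀ v, v ≠ r → ∃ p, G.Adj p v ∧ G.dist r v = G.dist r p + 1 := by
    intro v hv
    obtain ⟨p, hp⟩ := hconn.exists_walk_length_eq_dist v r
    cases p with
    | nil => exact absurd rfl hv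
    | cons hadj q =>
      rename_i u
      refine ⟨u, hadj.symm, ?_⟩
      have h1 := SimpleGraph.dist_le q
      have h2 := hconn.dist_triangle (u := r) (v := u) (w := v)
      have h3 : G.dist u v = 1 := SimpleGraph.dist_eq_one_iff_adj.2 hadj.symm
      rw [SimpleGraph.Walk.length_cons] at hp
      rw [SimpleGraph.dist_comm (u := r) (v := v), SimpleGraph.dist_comm (u := r) (v := u)] at *
      omega
  by_cases hx : ∃ x, G.dist r x = 2
  · obtain ⟨x, hx⟩ := hx
    refine aux_core G G.maxDegree hΔ G.degree_le_maxDegree r hr.symm (fun v => G.dist r v)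
      (fun v => ?_) ?_ hlow ?_ ?_ x hx
    · rw [hconn.dist_eq_zero_iff, eq_comm]
    · intro u v huv
      obtain ⟨col⟩ := hbip
      have hpar : ∀ v, Even (G.dist r v) ↔ (col r = col v) := by
        have key : ∀ n, ∀ v, G.dist r v = n → (Even n ↔ (col r = col v)) := by
          intro n
          induction n with
          | zero =>
            intro v hv
            rw [hconn.dist_eq_zero_iff] at hv
            simp [hv]
          | succ n ih =>
            intro v hv
            obtain ⟨p, hp, hpd⟩ := hlow v (by rintro rfl; simp at hv)
            have := ih p (by omega)
            have hne := col.valid hp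
            rw [Nat.even_add_one, this]
            generalize col r = a at *
            generalize col p = b at *
            generalize col v = e at *
            fin_cases a <;> fin_cases b <;> fin_cases e <;> simp_all
        exact fun v => key _ v rfl
      have hne := col.valid huv
      have h0 := huv.diff_dist_adj (u := r)
      have h1 : G.dist r u ≠ G.dist r v := by
        intro h
        have h1 := hpar u
        have h2 := hpar v
        rw [h, h2] at h1
        generalize col r = a at *
        generalize col u = b at *
        generalize col v = e at *
        fin_cases a <;> fin_cases b <;> fin_cases e <;> simp_all
      omega
    · intro φ hφ v
      have hle : ∀ ψ : G ≃g G, ψ r = r → ∀ v, G.dist r (ψ v) ≤ G.dist r v := by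
        intro ψ hψ v
        obtain ⟨p, hp⟩ := hconn.exists_walk_length_eq_dist r v
        have := SimpleGraph.dist_le (p.map ψ.toHom)
        rw [SimpleGraph.Walk.length_map, hp] at this
        have h2 : ψ.toHom r = r := hψ
        rw [h2] at this
        exact this
      apply le_antisymm (hle φ hφ v)
      have := hle φ.symm (by rw [RelIso.symm_apply_eq]; exact hφ.symm) (φ v)
      rwa [φ.symm_apply_apply] at this
    · intro a b u v hau hav hbu hbv hab
      by_contra huv
      have hcyc : (SimpleGraph.Walk.cons hau (SimpleGraph.Walk.cons hbu.symm
        (SimpleGraph.Walk.cons hbv (SimpleGraph.Walk.cons hav.symm SimpleGraph.Walk.nil)))).IsCycle := by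
        rw [SimpleGraph.Walk.cons_isCycle_iff]
        have h1 := hau.ne
        have h2 := hav.ne
        have h3 := hbu.ne
        have h4 := hbv.ne
        constructor
        · simp [SimpleGraph.Walk.isPath_def]
          grind
        · simp
          grind
      have := hgirth.trans (SimpleGraph.egirth_le_length hcyc)
      simp at this
      norm_cast at this
  · have hall : ∀ n, ∀ v, G.dist r v = n → v = r ∨ G.Adj r v := by
      intro n
      induction n with
      | zero =>
        intro v hv
        rw [hconn.dist_eq_zero_iff] at hv
        exact Or.inl hv.symm
      | succ n ih =>
        intro v hv
        obtain ⟨p, hp, hpd⟩ := hlow v (by rintro rfl; simp at hv)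
        rcases ih p (by omega) with h | h
        · right; exact h ▸ hp
        · exfalso
          have := SimpleGraph.dist_eq_one_iff_adj.2 h
          exact hx ⟨v, by omega⟩
    have hsub : (Finset.univ : Finset V) ⊆ insert r (G.neighborFinset r) := by
      intro v _
      rcases hall _ v rfl with h | h <;> simp [h]
    have h1 := Finset.card_le_card hsub
    have h2 := Finset.card_insert_le r (G.neighborFinset r)
    rw [G.card_neighborFinset_eq_degree, ← hr] at h2
    rw [Finset.card_univ] at h1
    obtain ⟨e⟩ : Nonempty (V ↪ Fin (G.maxDegree + 1)) :=
      Function.Embedding.nonempty_of_card_le (by simpa using h1.trans h2)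
    exact ⟨e, fun u v huv h => huv.ne (e.injective h),
      fun φ hφ v => e.injective (congrFun hφ v)⟩
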